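/- arXiv:0707.1223 — 8 statements merged into one kernel-verified Lean document; each statement's English description precedes it below -/
import Mathlib

section
/- Let s and k be positive integers with k+s divisible by 3, gcd(s,3k)=1 and gcd(k,3)=1. Let u be a primitive element of GF(2^{3k}) (a generator of the multiplicative group), and let v, w be elements of the subfield GF(2^k) with v·w ≠ 1. Then the function F : GF(2^{3k}) → GF(2^{3k}) defined by F(x) = u^{2^k}·x^{2^{2k}+2^{k+s}} + u·x^{2^s+1} + v·x^{2^{2k}+1} + w·u^{2^k+1}·x^{2^{k+s}+2^s} is almost perfect nonlinear (APN) on GF(2^{3k}): for every q ≠ 0 and every p in GF(2^{3k}), the equation F(x+q) + F(x) = p has at most 2 solutions x in GF(2^{3k}). -/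
/-!
Write `σ` and `τ` for the Frobenius powers `x ↦ x ^ 2 ^ k` and `x ↦ x ^ 2 ^ s`, so that `σ³ = 1`.
Then `F(x) = ⟨P, σP⟩`, where `P = (σ²x, u τx)` and `⟨·, ·⟩` is the bilinear form with Gram matrix
`!![v, 1; 1, w]`, which is nondegenerate and `σ`-invariant. If `x q` is the difference of two
solutions of `F(y + q) + F(y) = p`, then the vectors `P` of `x q` and `Q` of `q` satisfy
`⟨P, σQ⟩ = ⟨σP, Q⟩`, so every linear relation between `Q, σQ, σ²Q` also holds between `P, σP, σ²P`.
For the relation given by Cramer's rule, whose coefficients are the conjugates of `d = det (Q, σQ)`,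
the two coordinates say that `(x - σx) / (σd · σ²q)` and `σ(τx - στx) / (σd · u τq)` are fixed
by `σ`. Comparing these two fixed elements gives `σx = x`, or else `τ(σ²d) = ν · σd · u` with
`σν = ν`. As `3 ∣ k + s`, the map `τσ` is the identity modulo seventh powers, and `ν` is a seventh
power because `7` is prime to `2 ^ k - 1`; so in the second case `u` is a seventh power, which a
primitive element is not. Similarly, `d = 0` would make `u ^ (2 ^ k - 1)`, hence `u`, a seventh
power. Finally, once `σx = x`, the equation reads `d (x - τx) = 0`, so `x` is `0` or `1`.
-/

open Matrix

section Relations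

theorem sum_smul_eq_zero_of_apply_comm {ι R V W N : Type*} [Fintype ι] [CommSemiring R]
    [AddCommMonoid V] [Module R V] [AddCommMonoid W] [Module R W] [AddCommMonoid N] [Module R N]
    {B : V →ₗ[R] W →ₗ[R] N} (hB : B.SeparatingLeft) {P : ι → V} {Q : ι → W}
    (hQ : Submodule.span R (Set.range Q) = ⊤) (hPQ : ∀ i j, B (P i) (Q j) = B (P j) (Q i))
    {c : ι → R} (hc : ∑ i, c i • Q i = 0) : ∑ i, c i • P i = 0 := by
  refine hB _ fun y ↦ ?_
  have hzero : B (∑ i, c i • P i) = 0 := LinearMap.ext_on_range hQ fun j ↦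
    calc B (∑ i, c i • P i) (Q j) = ∑ i, c i • B (P i) (Q j) := by simp
      _ = ∑ i, c i • B (P j) (Q i) := by simp only [hPQ _ j]
      _ = B (P j) (∑ i, c i • Q i) := by simp
      _ = 0 := by rw [hc, map_zero]
  rw [hzero, LinearMap.zero_apply]

theorem exists_fixed_eq_mul_of_cyclic_sum_eq_zero {K : Type*} [Field K] {σ : K →+* K}
    (hσ : ∀ x, σ (σ (σ x)) = x) {a y : K} (ha : a ≠ 0) (hsum : a + σ a + σ (σ a) = 0)
    (hsum' : a * y + σ (a * y) + σ (σ (a * y)) = 0) :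
    ∃ l, σ l = l ∧ σ (y - σ y) = l * a := by
  refine ⟨σ (y - σ y) / a, ?_, (div_mul_cancel₀ _ ha).symm⟩
  have hσa : σ a ≠ 0 := (map_ne_zero σ).2 ha
  rw [map_div₀, div_eq_div_iff hσa ha]
  simp only [map_sub, map_mul, hσ] at hsum' ⊢
  linear_combination σ (σ y) * hsum - hsum'

end Relations

section MooreDeterminant

section CommRing

variable {R : Type*} [CommRing R] (σ : R →+* R)

/-- The Moore determinant of a pair: the determinant of the vectors `P` and `σP` of a plane. -/
def mooreDet (P : Fin 2 → R) : R := P 0 * σ (P 1) - P 1 * σ (P 0)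

variable {σ}

theorem mooreDet_smul_add_eq_zero (hσ : ∀ x, σ (σ (σ x)) = x) (P : Fin 2 → R) :
    σ (mooreDet σ P) • P + σ (σ (mooreDet σ P)) • (σ ∘ P) + mooreDet σ P • (σ ∘ σ ∘ P) = 0 := by
  ext i
  fin_cases i <;> simp [mooreDet, hσ] <;> ring

theorem toBilin'_comp_comp {n : Type*} [Fintype n] [DecidableEq n] {M : Matrix n n R}
    (hM : M.map σ = M) (P Q : n → R) : toBilin' M (σ ∘ P) (σ ∘ Q) = σ (toBilin' M P Q) := by
  have hMQ : σ ∘ (M *ᵥ Q) = M *ᵥ (σ ∘ Q) := by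
    ext i
    rw [Function.comp_apply, RingHom.map_mulVec, hM]
  rw [toBilin'_apply', toBilin'_apply', RingHom.map_dotProduct, hMQ]

end CommRing

section Field

variable {K : Type*} [Field K] {σ : K →+* K}

theorem span_pair_eq_top_of_mooreDet_ne_zero {P : Fin 2 → K} (hP : mooreDet σ P ≠ 0) :
    Submodule.span K {P, σ ∘ P} = ⊤ := by
  have hdet : (Matrix.of ![P, σ ∘ P]).det ≠ 0 := by
    simpa [det_fin_two, mooreDet, mul_comm] using hP
  have hspan := (linearIndependent_rows_of_det_ne_zero hdet).span_eq_top_of_card_eq_finrank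
    (by simp)
  rwa [← Matrix.range_cons_cons_empty P (σ ∘ P) ![]]

theorem mooreDet_smul_add_eq_zero_of_toBilin'_comm (hσ : ∀ x, σ (σ (σ x)) = x)
    {M : Matrix (Fin 2) (Fin 2) K} (hM : M.map σ = M) (hdet : M.det ≠ 0) {P Q : Fin 2 → K}
    (hQ : mooreDet σ Q ≠ 0) (hPQ : toBilin' M P (σ ∘ Q) = toBilin' M (σ ∘ P) Q) :
    σ (mooreDet σ Q) • P + σ (σ (mooreDet σ Q)) • (σ ∘ P) + mooreDet σ Q • (σ ∘ σ ∘ P) = 0 := by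
  have hσ' (R : Fin 2 → K) : σ ∘ σ ∘ σ ∘ R = R := funext fun i ↦ hσ (R i)
  have hPQ' : toBilin' M (σ ∘ P) (σ ∘ σ ∘ Q) = toBilin' M (σ ∘ σ ∘ P) (σ ∘ Q) := by
    rw [toBilin'_comp_comp hM, toBilin'_comp_comp hM, hPQ]
  have hPQ'' : toBilin' M (σ ∘ σ ∘ P) Q = toBilin' M P (σ ∘ σ ∘ Q) := by
    have := congrArg σ hPQ'
    rwa [← toBilin'_comp_comp hM, ← toBilin'_comp_comp hM, hσ', hσ'] at this
  have hspan : Submodule.span K (Set.range ![Q, σ ∘ Q, σ ∘ σ ∘ Q]) = ⊤ := by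
    refine eq_top_mono (Submodule.span_mono ?_) (span_pair_eq_top_of_mooreDet_ne_zero hQ)
    rintro _ (rfl | rfl)
    exacts [⟨0, rfl⟩, ⟨1, rfl⟩]
  have hrel := sum_smul_eq_zero_of_apply_comm (P := ![P, σ ∘ P, σ ∘ σ ∘ P])
    (c := ![σ (mooreDet σ Q), σ (σ (mooreDet σ Q)), mooreDet σ Q])
    (LinearMap.BilinForm.nondegenerate_toBilin'_iff_det_ne_zero.2 hdet).1 hspan
    (fun i j ↦ by fin_cases i <;> fin_cases j <;> simp [hPQ, hPQ', hPQ''])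
    (by simpa [Fin.sum_univ_three] using mooreDet_smul_add_eq_zero hσ Q)
  simpa [Fin.sum_univ_three] using hrel

theorem exists_fixed_eq_mul_mooreDet (hσ : ∀ x, σ (σ (σ x)) = x)
    {M : Matrix (Fin 2) (Fin 2) K} (hM : M.map σ = M) (hdet : M.det ≠ 0) {Q y : Fin 2 → K}
    (hQ : mooreDet σ Q ≠ 0) (hyQ : toBilin' M (Q * y) (σ ∘ Q) = toBilin' M (σ ∘ (Q * y)) Q)
    {i : Fin 2} (hi : Q i ≠ 0) :
    ∃ l, σ l = l ∧ σ (y i - σ (y i)) = l * (σ (mooreDet σ Q) * Q i) := by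
  have hrel := congrFun (mooreDet_smul_add_eq_zero hσ Q) i
  have hrel' := congrFun (mooreDet_smul_add_eq_zero_of_toBilin'_comm hσ hM hdet hQ hyQ) i
  refine exists_fixed_eq_mul_of_cyclic_sum_eq_zero hσ (mul_ne_zero ((map_ne_zero σ).2 hQ) hi) ?_ ?_
  · simpa [hσ] using hrel
  · simpa [hσ, mul_assoc] using hrel'

end Field

end MooreDeterminant

section APN

/-- Almost perfect nonlinear functions. The cardinality is `Set.ncard`, which is `0` on infinite
sets, so this is the usual notion only on finite types. -/
def IsAPN {L : Type*} [Add L] [Zero L] (f : L → L) : Prop :=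
  ∀ p q : L, q ≠ 0 → {x | f (x + q) + f x = p}.ncard ≤ 2

theorem isAPN_of_eq_or_eq_add {L : Type*} [Add L] [Zero L] {f : L → L}
    (hf : ∀ q x y, q ≠ 0 → f (x + q) + f x = f (y + q) + f y → x = y ∨ x = y + q) : IsAPN f := by
  intro p q hq
  rcases Set.eq_empty_or_nonempty {x | f (x + q) + f x = p} with hempty | ⟨y, hy⟩
  · simp [hempty]
  · calc {x | f (x + q) + f x = p}.ncard ≤ ({y, y + q} : Set L).ncard :=
          Set.ncard_le_ncard fun x hx ↦ hf q x y hq (hx.trans hy.symm)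
      _ ≤ 2 := (Set.ncard_insert_le _ _).trans (by simp)

end APN

section Quadrinomial

section CommRing

variable {R : Type*} [CommRing R] (σ τ : R →+* R) (u v w : R)

/-- The vector `(σ²x, u τx)`, on which the quadrinomial is a twisted quadratic form. In the
application `σ³ = 1`, so that `σ²` is the inverse of `σ`. -/
def frobeniusVec : R →+ Fin 2 → R where
  toFun x := ![σ (σ x), u * τ x]
  map_zero' := by simp
  map_add' x y := by simp [mul_add]

/-- The quadrinomial with arbitrary endomorphisms `σ`, `τ` in place of `x ↦ x ^ 2 ^ k` and
`x ↦ x ^ 2 ^ s`, written as the form with Gram matrix `!![v, 1; 1, w]` evaluated at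
`(σ²x, u τx)` and its conjugate. -/
def twistedQuadrinomial (x : R) : R :=
  toBilin' !![v, 1; 1, w] (frobeniusVec σ τ u x) (σ ∘ frobeniusVec σ τ u x)

variable {σ τ u v w}

@[simp]
theorem frobeniusVec_apply_zero (x : R) : frobeniusVec σ τ u x 0 = σ (σ x) := rfl

@[simp]
theorem frobeniusVec_apply_one (x : R) : frobeniusVec σ τ u x 1 = u * τ x := rfl

theorem frobeniusVec_mul (q x : R) :
    frobeniusVec σ τ u (x * q) = frobeniusVec σ τ u q * ![σ (σ x), τ x] := by
  ext i
  fin_cases i <;> simp <;> ring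

theorem toBilin'_gram_apply (P Q : Fin 2 → R) :
    toBilin' !![v, 1; 1, w] P Q = v * P 0 * Q 0 + P 0 * Q 1 + P 1 * Q 0 + w * P 1 * Q 1 := by
  simp only [toBilin'_apply, Fin.sum_univ_two, of_apply, cons_val_zero, cons_val_one]
  ring

theorem twistedQuadrinomial_eq (hσ : ∀ x, σ (σ (σ x)) = x) (x : R) :
    twistedQuadrinomial σ τ u v w x = σ u * (σ (σ x) * σ (τ x)) + u * (τ x * x) +
      v * (σ (σ x) * x) + w * (σ u * u) * (σ (τ x) * τ x) := by
  simp only [twistedQuadrinomial, toBilin'_gram_apply, Function.comp_apply,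
    frobeniusVec_apply_zero, frobeniusVec_apply_one, map_mul, hσ]
  ring

theorem mooreDet_frobeniusVec (hσ : ∀ x, σ (σ (σ x)) = x) (q : R) :
    mooreDet σ (frobeniusVec σ τ u q) = σ u * σ (σ q) * σ (τ q) - u * q * τ q := by
  simp only [mooreDet, frobeniusVec_apply_zero, frobeniusVec_apply_one, map_mul, hσ]
  ring

theorem toBilin'_frobeniusVec_sub_comm [CharP R 2] {q x y : R}
    (h : twistedQuadrinomial σ τ u v w (x + q) + twistedQuadrinomial σ τ u v w x =
      twistedQuadrinomial σ τ u v w (y + q) + twistedQuadrinomial σ τ u v w y) :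
    toBilin' !![v, 1; 1, w] (frobeniusVec σ τ u (x - y)) (σ ∘ frobeniusVec σ τ u q) =
      toBilin' !![v, 1; 1, w] (σ ∘ frobeniusVec σ τ u (x - y)) (frobeniusVec σ τ u q) := by
  have hsub : twistedQuadrinomial σ τ u v w (x + q) - twistedQuadrinomial σ τ u v w x =
      twistedQuadrinomial σ τ u v w (y + q) - twistedQuadrinomial σ τ u v w y := by
    rwa [CharTwo.sub_eq_add, CharTwo.sub_eq_add]
  rw [← CharTwo.add_eq_zero]
  simp only [twistedQuadrinomial, toBilin'_gram_apply, Function.comp_apply] at hsub ⊢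
  simp only [map_add, map_sub, Pi.add_apply, Pi.sub_apply] at hsub ⊢
  linear_combination hsub

end CommRing

section Field

variable {L : Type*} [Field L] {σ τ : L →+* L} {u v w : L}

theorem map_eq_self_of_toBilin'_comm (hσ : ∀ x, σ (σ (σ x)) = x)
    (hστ : ∀ x, τ (σ x) = σ (τ x)) (hv : σ v = v) (hw : σ w = w) (hvw : v * w ≠ 1) (hu : u ≠ 0)
    (htwist : ∀ c ν, c ≠ 0 → σ ν = ν → τ (σ c) ≠ ν * (c * u)) {q x : L} (hq : q ≠ 0)
    (hd : mooreDet σ (frobeniusVec σ τ u q) ≠ 0)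
    (h : toBilin' !![v, 1; 1, w] (frobeniusVec σ τ u (x * q)) (σ ∘ frobeniusVec σ τ u q) =
      toBilin' !![v, 1; 1, w] (σ ∘ frobeniusVec σ τ u (x * q)) (frobeniusVec σ τ u q)) :
    σ x = x := by
  have hM : (!![v, 1; 1, w] : Matrix (Fin 2) (Fin 2) L).map σ = !![v, 1; 1, w] := by
    ext i j
    fin_cases i <;> fin_cases j <;> simp [hv, hw]
  have hdet : (!![v, 1; 1, w] : Matrix (Fin 2) (Fin 2) L).det ≠ 0 := by
    simpa [det_fin_two, sub_eq_zero] using hvw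
  have hτq : τ q ≠ 0 := (map_ne_zero τ).2 hq
  rw [frobeniusVec_mul] at h
  set c := σ (mooreDet σ (frobeniusVec σ τ u q))
  have hc0 : c ≠ 0 := (map_ne_zero σ).2 hd
  obtain ⟨l, hl, hxl⟩ : ∃ l, σ l = l ∧ x - σ x = l * (c * σ (σ q)) := by
    simpa [hσ] using exists_fixed_eq_mul_mooreDet hσ hM hdet hd h (i := 0) (by simpa using hq)
  obtain ⟨m, hm, hxm⟩ : ∃ m, σ m = m ∧ σ (τ x - σ (τ x)) = m * (c * (u * τ q)) := by
    simpa using exists_fixed_eq_mul_mooreDet hσ hM hdet hd h (i := 1) (by simp [hu, hq])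
  have hτσ : σ (τ x - σ (τ x)) = τ l * (τ (σ c) * τ q) := by
    simpa only [map_sub, map_mul, hσ, hστ, hl] using congrArg (fun z ↦ τ (σ z)) hxl
  by_contra hx
  have hl0 : l ≠ 0 := by
    rintro rfl
    exact hx (sub_eq_zero.1 (by simpa using hxl)).symm
  have hτl : τ l ≠ 0 := (map_ne_zero τ).2 hl0
  refine htwist c (m / τ l) hc0 (by rw [map_div₀, hm, ← hστ, hl]) ?_
  rw [div_mul_eq_mul_div, eq_div_iff hτl]
  apply mul_right_cancel₀ hτq
  linear_combination hxm - hτσ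

theorem eq_zero_or_one_of_toBilin'_comm (hσ : ∀ x, σ (σ (σ x)) = x)
    (hστ : ∀ x, τ (σ x) = σ (τ x)) (hv : σ v = v) (hw : σ w = w) (hvw : v * w ≠ 1) (hu : u ≠ 0)
    (htwist : ∀ c ν, c ≠ 0 → σ ν = ν → τ (σ c) ≠ ν * (c * u))
    (hfix : ∀ x, τ x = x → x = 0 ∨ x = 1) {q x : L} (hq : q ≠ 0)
    (hd : mooreDet σ (frobeniusVec σ τ u q) ≠ 0)
    (h : toBilin' !![v, 1; 1, w] (frobeniusVec σ τ u (x * q)) (σ ∘ frobeniusVec σ τ u q) =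
      toBilin' !![v, 1; 1, w] (σ ∘ frobeniusVec σ τ u (x * q)) (frobeniusVec σ τ u q)) :
    x = 0 ∨ x = 1 := by
  have hx : σ x = x := map_eq_self_of_toBilin'_comm hσ hστ hv hw hvw hu htwist hq hd h
  have hτx : σ (τ x) = τ x := by rw [← hστ, hx]
  have hprod : mooreDet σ (frobeniusVec σ τ u q) * (x - τ x) = 0 := by
    rw [mooreDet_frobeniusVec hσ]
    simp only [toBilin'_gram_apply, Function.comp_apply, frobeniusVec_apply_zero,
      frobeniusVec_apply_one, map_mul, hσ, hx, hτx] at h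
    linear_combination h
  exact hfix x (sub_eq_zero.1 ((mul_eq_zero.1 hprod).resolve_left hd)).symm

theorem isAPN_twistedQuadrinomial [CharP L 2] (hσ : ∀ x, σ (σ (σ x)) = x)
    (hστ : ∀ x, τ (σ x) = σ (τ x)) (hv : σ v = v) (hw : σ w = w) (hvw : v * w ≠ 1) (hu : u ≠ 0)
    (htwist : ∀ c ν, c ≠ 0 → σ ν = ν → τ (σ c) ≠ ν * (c * u))
    (hfix : ∀ x, τ x = x → x = 0 ∨ x = 1)
    (hd : ∀ q, q ≠ 0 → mooreDet σ (frobeniusVec σ τ u q) ≠ 0) :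
    IsAPN (twistedQuadrinomial σ τ u v w) := by
  refine isAPN_of_eq_or_eq_add fun q x y hq h ↦ ?_
  have hz : (x - y) / q * q = x - y := div_mul_cancel₀ _ hq
  have hcomm := toBilin'_frobeniusVec_sub_comm h
  rw [← hz] at hcomm
  rcases eq_zero_or_one_of_toBilin'_comm hσ hστ hv hw hvw hu htwist hfix hq (hd q hq) hcomm
    with hzero | hone
  · left
    rwa [hzero, zero_mul, eq_comm, sub_eq_zero] at hz
  · right
    rwa [hone, one_mul, eq_comm, sub_eq_iff_eq_add'] at hz

end Field

end Quadrinomial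

section Powers

theorem exists_pow_eq_mul_pow_of_modEq {G : Type*} [CommGroupWithZero G] {a b n : ℕ}
    (hab : a ≡ b [MOD n]) {x : G} (hx : x ≠ 0) : ∃ y, y ≠ 0 ∧ x ^ a = x ^ b * y ^ n := by
  obtain ⟨c, hc⟩ := hab.symm.dvd
  refine ⟨x ^ c, zpow_ne_zero c hx, ?_⟩
  rw [← zpow_natCast, ← zpow_natCast, ← zpow_natCast, ← _root_.zpow_mul, ← zpow_add₀ hx]
  congr 1
  linear_combination hc

theorem two_pow_modEq_seven_of_modEq_three {a b : ℕ} (hab : a ≡ b [MOD 3]) :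
    2 ^ a ≡ 2 ^ b [MOD 7] := by
  rw [← ZMod.natCast_eq_natCast_iff]
  push_cast
  exact pow_eq_pow_of_modEq hab (by decide)

theorem coprime_two_pow_sub_one_seven {k : ℕ} (hk : ¬ 3 ∣ k) : (2 ^ k - 1).Coprime 7 := by
  rw [Nat.Coprime, show 7 = 2 ^ 3 - 1 by rfl, Nat.pow_sub_one_gcd_pow_sub_one,
    ((Nat.Prime.coprime_iff_not_dvd Nat.prime_three).2 hk).symm.gcd_eq_one, pow_one]

theorem notMem_range_pow_of_forall_eq_pow {L : Type*} [MonoidWithZero L] [Finite L] {u : L}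
    (hu : ∀ x : L, x ≠ 0 → ∃ m : ℕ, x = u ^ m) {p : ℕ} (hp : p.Prime)
    (hpL : p ∣ Nat.card Lˣ) : u ∉ Set.range (· ^ p : L → L) := by
  rintro ⟨y, hy : y ^ p = u⟩
  have hsurj : Function.Surjective (· ^ p : L → L) := fun x ↦ by
    rcases eq_or_ne x 0 with rfl | hx
    · exact ⟨0, zero_pow hp.ne_zero⟩
    · obtain ⟨m, rfl⟩ := hu x hx
      exact ⟨y ^ m, by rw [← hy]; exact pow_right_comm y m p⟩
  have := Fact.mk hp
  obtain ⟨ζ, hζ⟩ := exists_prime_orderOf_dvd_card' p hpL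
  have hζ1 : (ζ : L) = 1 := Finite.injective_iff_surjective.2 hsurj <| by
    simp [← Units.val_pow_eq_pow_val, ← hζ, pow_orderOf_eq_one]
  exact hp.ne_one (hζ.symm.trans (orderOf_eq_one_iff.2 (Units.ext hζ1)))

end Powers

section FiniteField

theorem seven_dvd_natCard_units {L : Type*} [GroupWithZero L] {k : ℕ}
    (hL : Nat.card L = 2 ^ (3 * k)) : 7 ∣ Nat.card Lˣ := by
  rw [Nat.card_units, hL, pow_mul]
  simpa using Nat.sub_dvd_pow_sub_pow 8 1 k

theorem iterateFrobenius_eq_self_of_natCard_eq {L : Type*} [Field L] {p n : ℕ} [ExpChar L p]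
    (hL : Nat.card L = p ^ n) (x : L) : iterateFrobenius L p n x = x := by
  have : Finite L := Nat.finite_of_card_ne_zero (by simp [hL, expChar_ne_zero L p])
  have := Fintype.ofFinite L
  rw [iterateFrobenius_def, ← hL, Nat.card_eq_fintype_card, FiniteField.pow_card]

variable {L : Type*} [Field L] [CharP L 2] {k s : ℕ} {u : L}

local notation "σ" => iterateFrobenius L 2 k
local notation "τ" => iterateFrobenius L 2 s

theorem iterateFrobenius_two_cubed (hL : Nat.card L = 2 ^ (3 * k)) (x : L) : σ (σ (σ x)) = x := by
  rw [← iterateFrobenius_add_apply, ← iterateFrobenius_add_apply, show k + k + k = 3 * k by ring,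
    iterateFrobenius_eq_self_of_natCard_eq hL]

theorem mooreDet_frobeniusVec_ne_zero (hL : Nat.card L = 2 ^ (3 * k)) (hk : ¬ 3 ∣ k)
    (hks : 3 ∣ k + s) (hu : u ∉ Set.range (· ^ 7 : L → L)) {q : L} (hq : q ≠ 0) :
    mooreDet σ (frobeniusVec σ τ u q) ≠ 0 := by
  intro hd
  rw [mooreDet_frobeniusVec (iterateFrobenius_two_cubed hL)] at hd
  simp only [iterateFrobenius_def, ← pow_mul, ← pow_add] at hd
  have hu0 : u ≠ 0 := fun h0 ↦ hu ⟨0, by simp [h0]⟩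
  obtain ⟨y, hy0, hy⟩ := exists_pow_eq_mul_pow_of_modEq
    (two_pow_modEq_seven_of_modEq_three (a := k + k) (b := s) (by rw [Nat.ModEq]; lia)) hq
  obtain ⟨z, hz0, hz⟩ := exists_pow_eq_mul_pow_of_modEq
    (two_pow_modEq_seven_of_modEq_three (a := s + k) (b := 0) (by rw [Nat.ModEq]; lia)) hq
  have hpow : u ^ (2 ^ k - 1) = (y * z)⁻¹ ^ 7 := by
    rw [inv_pow]
    refine eq_inv_of_mul_eq_one_left ?_
    apply mul_left_cancel₀ (mul_ne_zero (mul_ne_zero hu0 hq) (pow_ne_zero (2 ^ s) hq))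
    rw [hy, hz, ← pow_sub_one_mul (Nat.two_pow_pos k).ne' u] at hd
    linear_combination hd
  exact hu ((pow_mem_range_pow_of_coprime (coprime_two_pow_sub_one_seven hk) u).1 ⟨_, hpow.symm⟩)

theorem iterateFrobenius_iterateFrobenius_ne_mul (hk : ¬ 3 ∣ k) (hks : 3 ∣ k + s)
    (hu : u ∉ Set.range (· ^ 7 : L → L)) {c ν : L} (hc : c ≠ 0) (hν : σ ν = ν) :
    τ (σ c) ≠ ν * (c * u) := by
  intro h
  obtain ⟨y, hy0, hy⟩ := exists_pow_eq_mul_pow_of_modEq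
    (two_pow_modEq_seven_of_modEq_three (a := s + k) (b := 0) (by rw [Nat.ModEq]; lia)) hc
  rw [← iterateFrobenius_add_apply, iterateFrobenius_def, hy, pow_zero, pow_one] at h
  have hyu : y ^ 7 = ν * u := mul_left_cancel₀ hc (by linear_combination h)
  have hν0 : ν ≠ 0 := by
    rintro rfl
    exact pow_ne_zero 7 hy0 (by simpa using hyu)
  have hν1 : ν ^ (2 ^ k - 1) = 1 := by
    rw [iterateFrobenius_def, ← pow_sub_one_mul (Nat.two_pow_pos k).ne' ν] at hν
    exact mul_right_cancel₀ hν0 (by rw [hν, one_mul])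
  obtain ⟨e, he : e ^ 7 = ν⟩ :=
    (pow_mem_range_pow_of_coprime (coprime_two_pow_sub_one_seven hk) ν).1 ⟨1, by simp [hν1]⟩
  exact hu ⟨y / e, by simp only [div_pow, he, hyu, mul_div_cancel_left₀ u hν0]⟩

theorem eq_zero_or_one_of_iterateFrobenius_two_eq {m n : ℕ} (hmn : m.gcd n = 1) {x : L}
    (hm : iterateFrobenius L 2 m x = x) (hn : iterateFrobenius L 2 n x = x) : x = 0 ∨ x = 1 := by
  rw [coe_iterateFrobenius] at hm hn
  have hx : Function.IsPeriodicPt (frobenius L 2) (m.gcd n) x := .gcd hm hn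
  rw [hmn] at hx
  have hsq : x ^ 2 = x := hx
  exact IsIdempotentElem.iff_eq_zero_or_one.1 ((sq x).symm.trans hsq)

end FiniteField

theorem quadrinomial_is_APN_general {L : Type*} [Field L] {s k : ℕ}
    (hL : Nat.card L = 2 ^ (3 * k)) (h3 : 3 ∣ k + s) (hsk : Nat.gcd s (3 * k) = 1) {u v w : L}
    (hu : u ∉ Set.range (· ^ 7 : L → L)) (hv : v ^ (2 ^ k) = v) (hw : w ^ (2 ^ k) = w)
    (hvw : v * w ≠ 1) :
    IsAPN fun x : L ↦ u ^ (2 ^ k) * x ^ (2 ^ (2 * k) + 2 ^ (k + s))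
        + u * x ^ (2 ^ s + 1) + v * x ^ (2 ^ (2 * k) + 1)
        + w * u ^ (2 ^ k + 1) * x ^ (2 ^ (k + s) + 2 ^ s) := by
  have : Finite L := Nat.finite_of_card_ne_zero (by simp [hL])
  have := Fintype.ofFinite L
  have : CharP L 2 := charP_of_card_eq_prime_pow (Nat.card_eq_fintype_card.symm.trans hL)
  have hk : ¬ 3 ∣ k := fun hk ↦ by
    have : 3 ∣ Nat.gcd s (3 * k) := Nat.dvd_gcd ((Nat.dvd_add_right hk).1 h3) (dvd_mul_right 3 k)
    lia
  have hu0 : u ≠ 0 := fun h0 ↦ hu ⟨0, by simp [h0]⟩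
  have hσ := iterateFrobenius_two_cubed hL
  refine (congrArg IsAPN (funext fun x ↦ ?_)).mpr <| isAPN_twistedQuadrinomial hσ
    (RingHom.congr_fun (RingHom.iterateFrobenius_comm (iterateFrobenius L 2 s) 2 k)) hv hw hvw hu0
    (fun c ν ↦ iterateFrobenius_iterateFrobenius_ne_mul hk h3 hu)
    (fun x hx ↦ eq_zero_or_one_of_iterateFrobenius_two_eq hsk hx
      (iterateFrobenius_eq_self_of_natCard_eq hL x))
    (fun q ↦ mooreDet_frobeniusVec_ne_zero hL hk h3 hu)
  rw [twistedQuadrinomial_eq hσ]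
  simp only [iterateFrobenius_def]
  ring

/-- The quadrinomial
`F(x) = u^{2^k} x^{2^{2k}+2^{k+s}} + u x^{2^s+1} + v x^{2^{2k}+1} + w u^{2^k+1} x^{2^{k+s}+2^s}`
is APN on `GF(2^{3k})` when `3 ∣ k+s`, `gcd(s,3k) = 1`, `gcd(k,3) = 1`, `u` is a primitive
element, and `v, w` lie in the subfield `GF(2^k)` with `v·w ≠ 1`. -/
theorem quadrinomial_is_APN
    (s k : ℕ) (hs : 0 < s) (hk : 0 < k)
    (h3 : 3 ∣ (k + s)) (hsk : Nat.gcd s (3 * k) = 1) (hk3 : Nat.gcd k 3 = 1)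
    (u v w : GaloisField 2 (3 * k))
    (hu : ∀ x : GaloisField 2 (3 * k), x ≠ 0 → ∃ m : ℕ, x = u ^ m)
    (hv : v ^ (2 ^ k) = v) (hw : w ^ (2 ^ k) = w)
    (hvw : v * w ≠ 1)
    (F : GaloisField 2 (3 * k) → GaloisField 2 (3 * k))
    (hF : ∀ x, F x = u ^ (2 ^ k) * x ^ (2 ^ (2 * k) + 2 ^ (k + s))
        + u * x ^ (2 ^ s + 1) + v * x ^ (2 ^ (2 * k) + 1)
        + w * u ^ (2 ^ k + 1) * x ^ (2 ^ (k + s) + 2 ^ s)) :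
    ∀ p q : GaloisField 2 (3 * k), q ≠ 0 →
      {x : GaloisField 2 (3 * k) | F (x + q) + F x = p}.ncard ≤ 2 := by
  obtain rfl := funext hF
  have hL := GaloisField.card 2 (3 * k) (by lia)
  exact quadrinomial_is_APN_general hL h3 hsk
    (notMem_range_pow_of_forall_eq_pow hu Nat.prime_seven (seven_dvd_natCard_units hL)) hv hw hvw
end

section
/- Let s and k be positive integers with k+s divisible by 3, gcd(s,3k)=1 and gcd(k,3)=1, let u be a primitive element of GF(2^{3k}), and let v be an element of the subfield GF(2^k). Then for every nonzero q in GF(2^{3k}), A := v·q^{2^{2k}+1} + u·q^{2^s+1} ≠ 0. -/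
/-!
Since `gcd (2 ^ d - 1) (2 ^ k - 1) = 2 ^ gcd d k - 1`, when `d` and `k` are coprime every root of
`x ^ 2 ^ k = x` is a `(2 ^ d - 1)`-th power. If moreover `a ≡ b [MOD d]`, then `q ^ 2 ^ a` and
`q ^ 2 ^ b` differ by a `(2 ^ d - 1)`-th power, so `v * q ^ 2 ^ a + u * q ^ 2 ^ b = 0` makes `u` a
`(2 ^ d - 1)`-th power as well (`-1` is one because the exponent is odd). For `d = 3` this says
that `u` is a seventh power, which a primitive element cannot be as `7 ∣ 2 ^ (3 * k) - 1`.
-/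

theorem two_pow_modEq_two_pow {a b d : ℕ} (h : a ≡ b [MOD d]) :
    2 ^ a ≡ 2 ^ b [MOD 2 ^ d - 1] := by
  have two_pow_eq_one : (2 : ZMod (2 ^ d - 1)) ^ d = 1 := by
    have h_cast : ((2 ^ d - 1 : ℕ) : ZMod (2 ^ d - 1)) = 0 := ZMod.natCast_self _
    rwa [Nat.cast_sub Nat.one_le_two_pow, sub_eq_zero, Nat.cast_pow, Nat.cast_ofNat,
      Nat.cast_one] at h_cast
  rw [← ZMod.natCast_eq_natCast_iff]
  exact_mod_cast pow_eq_pow_of_modEq h two_pow_eq_one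

theorem coprime_two_pow_sub_one {d k : ℕ} (h : d.Coprime k) :
    (2 ^ d - 1).Coprime (2 ^ k - 1) := by
  rw [Nat.Coprime, Nat.pow_sub_one_gcd_pow_sub_one, h, pow_one]

theorem exists_pow_eq_of_coprime_of_pow_succ_eq_self {M₀ : Type*} [MonoidWithZero M₀]
    [IsCancelMulZero M₀] {m n : ℕ} (hn : n ≠ 0) (hnm : n.Coprime m) {v : M₀}
    (hv : v ^ (m + 1) = v) : ∃ x, x ^ n = v := by
  obtain rfl | hv₀ := eq_or_ne v 0
  · exact ⟨0, zero_pow hn⟩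
  have hv_one : v ^ m = 1 := mul_right_cancel₀ hv₀ (by rw [← pow_succ, hv, one_mul])
  obtain ⟨j, hj⟩ :=
    exists_pow_eq_self_of_coprime (hnm.coprime_dvd_right (orderOf_dvd_of_pow_eq_one hv_one))
  exact ⟨v ^ j, by rw [pow_right_comm, hj]⟩

theorem exists_pow_mul_pow_eq_of_modEq {G₀ : Type*} [GroupWithZero G₀] {q : G₀} (hq : q ≠ 0)
    {a b n : ℕ} (h : a ≡ b [MOD n]) : ∃ y, y ^ n * q ^ b = q ^ a := by
  obtain ⟨c, hc⟩ := h.symm.dvd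
  refine ⟨q ^ c, ?_⟩
  rw [← zpow_natCast, ← zpow_mul, ← zpow_natCast, ← zpow_natCast, ← zpow_add₀ hq, mul_comm c, ← hc,
    sub_add_cancel]

theorem mul_pow_add_mul_pow_ne_zero {F : Type*} [Field F] {a b n : ℕ} (hn : Odd n)
    (hab : a ≡ b [MOD n]) {u v q : F} (hv : ∃ x, x ^ n = v) (hu : ∀ x, x ^ n ≠ u) (hq : q ≠ 0) :
    v * q ^ a + u * q ^ b ≠ 0 := by
  obtain ⟨x, rfl⟩ := hv
  obtain ⟨y, hy⟩ := exists_pow_mul_pow_eq_of_modEq hq hab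
  intro h
  refine hu (-(x * y)) (mul_right_cancel₀ (pow_ne_zero b hq) ?_)
  rw [hn.neg_pow, mul_pow]
  linear_combination -h - x ^ n * hy

theorem coprime_card_of_pow_surjective {G : Type*} [Group G] [Finite G] {n : ℕ}
    (h : Function.Surjective fun x : G ↦ x ^ n) : n.Coprime (Nat.card G) := by
  refine Nat.coprime_of_dvd fun p hp hpn hpG ↦ ?_
  have : Fact p.Prime := ⟨hp⟩
  obtain ⟨g, hg⟩ := exists_prime_orderOf_dvd_card' p hpG
  have hg_pow : g ^ n = 1 := orderOf_dvd_iff_pow_eq_one.mp (hg ▸ hpn)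
  have hg_one : g = 1 := Finite.injective_iff_surjective.mpr h (hg_pow.trans (one_pow n).symm)
  exact hp.one_lt.ne (by rw [← hg, hg_one, orderOf_one])

theorem pow_ne_of_forall_exists_eq_pow {F : Type*} [Field F] [Finite F] {n : ℕ} (hn : n ≠ 1)
    (hnF : n ∣ Nat.card F - 1) {u : F} (hu : ∀ x : F, x ≠ 0 → ∃ m : ℕ, x = u ^ m) (x : F) :
    x ^ n ≠ u := by
  rintro rfl
  have hn₀ : n ≠ 0 := by
    rintro rfl
    exact (Nat.sub_pos_of_lt Finite.one_lt_card).ne' (zero_dvd_iff.mp hnF)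
  have pow_surjective : Function.Surjective fun y : Fˣ ↦ y ^ n := by
    intro y
    obtain ⟨m, hm⟩ := hu y y.ne_zero
    have hy : (x ^ m) ^ n = y := by rw [hm, pow_right_comm]
    obtain ⟨z, hz⟩ : IsUnit (x ^ m) := (isUnit_pow_iff hn₀).mp (hy ▸ y.isUnit)
    exact ⟨z, Units.ext (by rw [Units.val_pow_eq_pow_val, hz, hy])⟩
  have h := coprime_card_of_pow_surjective pow_surjective
  rw [Nat.card_units] at h
  exact hn (Nat.eq_one_of_dvd_coprimes h dvd_rfl hnF)

theorem coefficient_A_ne_zero_general {F : Type*} [Field F] {a b d k : ℕ} (hd : d ≠ 0)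
    (hdk : d.Coprime k) (hab : a ≡ b [MOD d]) {u v q : F} (hu : ∀ x, x ^ (2 ^ d - 1) ≠ u)
    (hv : v ^ 2 ^ k = v) (hq : q ≠ 0) :
    v * q ^ (2 ^ a + 1) + u * q ^ (2 ^ b + 1) ≠ 0 := by
  have odd_exponent : Odd (2 ^ d - 1) :=
    Nat.Even.sub_odd Nat.one_le_two_pow (even_two.pow_of_ne_zero hd) odd_one
  have exponents_modEq : 2 ^ a + 1 ≡ 2 ^ b + 1 [MOD 2 ^ d - 1] :=
    (two_pow_modEq_two_pow hab).add_right 1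
  have hv_pow : ∃ x, x ^ (2 ^ d - 1) = v :=
    exists_pow_eq_of_coprime_of_pow_succ_eq_self odd_exponent.pos.ne'
      (coprime_two_pow_sub_one hdk) (by rwa [Nat.sub_add_cancel Nat.one_le_two_pow])
  exact mul_pow_add_mul_pow_ne_zero odd_exponent exponents_modEq hv_pow hu hq

/-- The coefficient `A = v q^{2^{2k}+1} + u q^{2^s+1}` never vanishes for nonzero `q`. -/
theorem coefficient_A_ne_zero (s k : ℕ) (hs : 0 < s) (hk : 0 < k)
    (h3 : 3 ∣ (k + s)) (hsk : Nat.gcd s (3 * k) = 1) (hk3 : Nat.gcd k 3 = 1)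
    (u v : GaloisField 2 (3 * k))
    (hu : ∀ x : GaloisField 2 (3 * k), x ≠ 0 → ∃ m : ℕ, x = u ^ m)
    (hv : v ^ (2 ^ k) = v) :
    ∀ q : GaloisField 2 (3 * k), q ≠ 0 →
      v * q ^ (2 ^ (2 * k) + 1) + u * q ^ (2 ^ s + 1) ≠ 0 := by
  have seven_dvd : 2 ^ 3 - 1 ∣ Nat.card (GaloisField 2 (3 * k)) - 1 := by
    rw [GaloisField.card 2 (3 * k) (by lia)]
    exact Nat.pow_sub_one_dvd_pow_sub_one 2 (dvd_mul_right 3 k)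
  have two_mul_modEq : 2 * k ≡ s [MOD 3] := by grind [Nat.ModEq]
  exact fun q ↦ coefficient_A_ne_zero_general three_ne_zero (Nat.Coprime.symm hk3) two_mul_modEq
    (pow_ne_of_forall_exists_eq_pow (by norm_num) seven_dvd hu) hv
end

section
/- Let s and k be positive integers with k+s divisible by 3, gcd(s,3k)=1 and gcd(k,3)=1, let u be a primitive element of GF(2^{3k}), and let v be an element of the subfield GF(2^k). Then for every nonzero q in GF(2^{3k}), B := v·q^{2^{2k}+1} + u^{2^k}·q^{2^{2k}+2^{k+s}} ≠ 0. -/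
/-!
Suppose `B = 0`. Dividing by `q ^ (2 ^ (2 * k) + 1)` shows that
`u ^ 2 ^ k * q ^ (2 ^ (k + s) - 1)` is a nonzero element of `GF(2^k)`, hence killed by the exponent
`2 ^ k - 1`. Because `k` is prime to `3`, `7 * (2 ^ k - 1) ∣ 2 ^ (3 * k) - 1`, so this element is a
seventh power in `GF(2^{3k})`. Since `3 ∣ k + s`, the factor `q ^ (2 ^ (k + s) - 1)` is one as well,
and so is `u ^ 2 ^ k`. As `u` is primitive, this forces `7 ∣ 2 ^ k`, which is absurd.
For `GF(r^{nk})` over `GF(r^k)`, with `k` prime to `n`, the same argument runs with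
`1 + r + ⋯ + r ^ (n - 1)` in place of `7`.
-/

open Finset

section Arithmetic

variable {r n k : ℕ}

theorem geom_sum_mul_pow_sub_one_dvd_pow_mul_sub_one (hr : 1 < r) (hkn : k.Coprime n) :
    (∑ i ∈ range n, r ^ i) * (r ^ k - 1) ∣ r ^ (n * k) - 1 := by
  have hlcm : Nat.lcm (r ^ n - 1) (r ^ k - 1) = (∑ i ∈ range n, r ^ i) * (r ^ k - 1) := by
    have hgcd : Nat.gcd (r ^ n - 1) (r ^ k - 1) = r - 1 := by
      rw [Nat.pow_sub_one_gcd_pow_sub_one, hkn.symm.gcd_eq_one, pow_one]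
    refine Nat.eq_of_mul_eq_mul_left (Nat.sub_pos_of_lt hr) ?_
    rw [← hgcd, Nat.gcd_mul_lcm, hgcd, ← geom_sum_mul_of_one_le hr.le n]
    ring
  rw [← hlcm]
  exact Nat.lcm_dvd (Nat.pow_sub_one_dvd_pow_sub_one r (dvd_mul_right n k))
    (Nat.pow_sub_one_dvd_pow_sub_one r (dvd_mul_left k n))

theorem not_geom_sum_dvd_pow (hr : 0 < r) (hn : 1 < n) (j : ℕ) :
    ¬ ∑ i ∈ range n, r ^ i ∣ r ^ j := by
  obtain ⟨n, rfl⟩ : ∃ m, n = m + 2 := ⟨n - 2, by omega⟩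
  have hgt : 1 < ∑ i ∈ range (n + 2), r ^ i := by
    have : 0 < ∑ i ∈ range (n + 1), r ^ i := geom_sum_pos (Nat.zero_le r) n.succ_ne_zero
    rw [geom_sum_succ]
    exact Nat.lt_add_of_pos_left (Nat.mul_pos hr this)
  have hcop : (∑ i ∈ range (n + 2), r ^ i).Coprime r := by
    rw [geom_sum_succ]
    simp
  exact fun h ↦ hgt.ne' ((hcop.pow_right j).eq_one_of_dvd h)

end Arithmetic

theorem dvd_of_pow_mul_pow_pow_eq_one {M : Type*} [CommMonoid M] {g x : M} {c d e j : ℕ}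
    (hg : IsOfFinOrder g) (hdc : d * c ∣ orderOf g) (hx : x ^ orderOf g = 1) (hde : d ∣ e)
    (h : (g ^ j * x ^ e) ^ c = 1) : d ∣ j := by
  obtain ⟨t, ht⟩ := hdc
  obtain ⟨e, rfl⟩ := hde
  have hxt : x ^ (d * e * (c * t)) = 1 := by
    rw [show d * e * (c * t) = orderOf g * e by rw [ht]; ring, pow_mul, hx, one_pow]
  have hgt : g ^ (j * (c * t)) = 1 := by
    calc g ^ (j * (c * t)) = g ^ (j * (c * t)) * x ^ (d * e * (c * t)) := by rw [hxt, mul_one]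
      _ = ((g ^ j * x ^ (d * e)) ^ c) ^ t := by rw [← pow_mul, mul_pow, ← pow_mul, ← pow_mul]
      _ = 1 := by rw [h, one_pow]
  have hpos : 0 < c * t := by
    rw [mul_assoc] at ht
    exact Nat.pos_of_mul_pos_left (ht ▸ hg.orderOf_pos)
  refine Nat.dvd_of_mul_dvd_mul_right hpos ?_
  rw [← mul_assoc, ← ht]
  exact orderOf_dvd_of_pow_eq_one hgt

theorem orderOf_eq_natCard_sub_one_of_forall_eq_pow {G₀ : Type*} [GroupWithZero G₀] {u : G₀}
    (hcard : 2 < Nat.card G₀) (hu : ∀ x : G₀, x ≠ 0 → ∃ m : ℕ, x = u ^ m) :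
    orderOf u = Nat.card G₀ - 1 := by
  have : Finite G₀ := Nat.finite_of_card_ne_zero (by omega)
  have : Nontrivial G₀ˣ := Finite.one_lt_card_iff_nontrivial.mp (by rw [Nat.card_units]; omega)
  have hu0 : u ≠ 0 := by
    rintro rfl
    obtain ⟨g, hg⟩ := exists_ne (1 : G₀ˣ)
    obtain ⟨m, hm⟩ := hu g g.ne_zero
    rcases eq_or_ne m 0 with rfl | hm0
    · exact hg (Units.ext (by simpa using hm))
    · exact g.ne_zero (hm.trans (zero_pow hm0))
  lift u to G₀ˣ using hu0.isUnit
  rw [orderOf_units, ← Nat.card_units]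
  refine orderOf_eq_card_of_forall_mem_powers fun x ↦ ?_
  obtain ⟨m, hm⟩ := hu x x.ne_zero
  exact ⟨m, Units.ext (by simp [hm])⟩

theorem pow_natCard_sub_one_eq_one {G₀ : Type*} [GroupWithZero G₀] {x : G₀} (hx : x ≠ 0) :
    x ^ (Nat.card G₀ - 1) = 1 := by
  lift x to G₀ˣ using hx.isUnit
  rw [← Nat.card_units, ← Units.val_pow_eq_pow_val, pow_card_eq_one', Units.val_one]

theorem pow_mul_pow_pow_ne_self {G₀ : Type*} [CommGroupWithZero G₀] {r n k e : ℕ}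
    (hcard : Nat.card G₀ = r ^ (n * k)) (hr : 1 < r) (hn : 1 < n) (hkn : k.Coprime n)
    (he : ∑ i ∈ range n, r ^ i ∣ e) {u x : G₀} (hu : ∀ y : G₀, y ≠ 0 → ∃ i : ℕ, y = u ^ i)
    (hx : x ≠ 0) (j : ℕ) : (u ^ r ^ j * x ^ e) ^ r ^ k ≠ u ^ r ^ j * x ^ e := by
  have hk : k ≠ 0 := by
    rintro rfl
    exact hn.ne' ((Nat.coprime_zero_left n).mp hkn)
  have hcard_gt : 2 < Nat.card G₀ := by
    have hnk : 1 < n * k := hn.trans_le (Nat.le_mul_of_pos_right n hk.pos)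
    rw [hcard]
    exact lt_of_le_of_lt hnk (Nat.lt_pow_self hr)
  have horder : orderOf u = Nat.card G₀ - 1 :=
    orderOf_eq_natCard_sub_one_of_forall_eq_pow hcard_gt hu
  have hu_fin : IsOfFinOrder u := orderOf_pos_iff.mp (by omega)
  have hy : u ^ r ^ j * x ^ e ≠ 0 :=
    mul_ne_zero (pow_ne_zero _ hu_fin.isUnit.ne_zero) (pow_ne_zero _ hx)
  intro hfix
  have hpow : (u ^ r ^ j * x ^ e) ^ (r ^ k - 1) = 1 :=
    mul_right_cancel₀ hy (by rw [pow_sub_one_mul (by positivity), hfix, one_mul])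
  refine not_geom_sum_dvd_pow hr.pos hn j (dvd_of_pow_mul_pow_pow_eq_one hu_fin ?_ ?_ he hpow)
  · rw [horder, hcard]
    exact geom_sum_mul_pow_sub_one_dvd_pow_mul_sub_one hr hkn
  · rw [horder, pow_natCard_sub_one_eq_one hx]

theorem neg_pow_eq_neg_of_dvd_natCard {F : Type*} [Field F] [Finite F] {c : ℕ}
    (hc : c ∣ Nat.card F) (x : F) : (-x) ^ c = -x ^ c := by
  have := Fintype.ofFinite F
  obtain ⟨p, _⟩ := CharP.exists F
  obtain ⟨m, hp, hm⟩ := FiniteField.card F p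
  have : Fact p.Prime := ⟨hp⟩
  rw [Nat.card_eq_fintype_card, hm] at hc
  obtain ⟨i, -, rfl⟩ := (Nat.dvd_prime_pow hp).mp hc
  simpa [hp.ne_zero] using sub_pow_char_pow (p := p) (n := i) (0 : F) x

theorem coefficient_B_ne_zero_general {F : Type*} [Field F] [Finite F] {r n k m : ℕ}
    (hcard : Nat.card F = r ^ (n * k)) (hn : 1 < n) (hkn : k.Coprime n) (hm : n ∣ m) {u v q : F}
    (hu : ∀ x : F, x ≠ 0 → ∃ i : ℕ, x = u ^ i) (hv : v ^ r ^ k = v) (hq : q ≠ 0) (a j : ℕ) :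
    v * q ^ (a + 1) + u ^ r ^ j * q ^ (a + r ^ m) ≠ 0 := by
  have hr : 1 < r := lt_of_pow_lt_pow_left₀ (n * k) (Nat.zero_le r) <| by
    rw [one_pow, ← hcard]
    exact Finite.one_lt_card
  have hdvd : ∑ i ∈ range n, r ^ i ∣ r ^ m - 1 :=
    (Dvd.intro _ (geom_sum_mul_of_one_le hr.le n)).trans (Nat.pow_sub_one_dvd_pow_sub_one r hm)
  intro hB
  have hv_eq : u ^ r ^ j * q ^ (r ^ m - 1) = -v := by
    refine eq_neg_of_add_eq_zero_right (mul_right_cancel₀ (pow_ne_zero (a + 1) hq) ?_)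
    rw [zero_mul, ← hB, add_mul, mul_assoc (u ^ r ^ j), ← pow_add,
      show r ^ m - 1 + (a + 1) = a + r ^ m by have := Nat.one_le_pow m r hr.pos; omega]
  refine pow_mul_pow_pow_ne_self hcard hr hn hkn hdvd hu hq j ?_
  have hdvd_card : r ^ k ∣ Nat.card F := hcard ▸ pow_dvd_pow r (Nat.le_mul_of_pos_left k hn.pos)
  rw [hv_eq, neg_pow_eq_neg_of_dvd_natCard hdvd_card, hv]

/-- The coefficient `B = v q^{2^{2k}+1} + u^{2^k} q^{2^{2k}+2^{k+s}}` never vanishes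
for nonzero `q`. -/
theorem coefficient_B_ne_zero (s k : ℕ) (hs : 0 < s) (hk : 0 < k)
    (h3 : 3 ∣ (k + s)) (hsk : Nat.gcd s (3 * k) = 1) (hk3 : Nat.gcd k 3 = 1)
    (u v : GaloisField 2 (3 * k))
    (hu : ∀ x : GaloisField 2 (3 * k), x ≠ 0 → ∃ m : ℕ, x = u ^ m)
    (hv : v ^ (2 ^ k) = v) :
    ∀ q : GaloisField 2 (3 * k), q ≠ 0 →
      v * q ^ (2 ^ (2 * k) + 1) + u ^ (2 ^ k) * q ^ (2 ^ (2 * k) + 2 ^ (k + s)) ≠ 0 := by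
  intro _ hq
  exact coefficient_B_ne_zero_general (GaloisField.card 2 (3 * k) (by omega)) (by norm_num) hk3 h3
    hu hv hq _ _
end

section
/- Let s and k be positive integers with k+s divisible by 3, gcd(s,3k)=1 and gcd(k,3)=1, let u be a primitive element of GF(2^{3k}), and let w be an element of the subfield GF(2^k). Then for every nonzero q in GF(2^{3k}), C := w·u^{2^k+1}·q^{2^{k+s}+2^s} + u·q^{2^s+1} ≠ 0. -/
/-!
Put `n = 1 + q + ⋯ + q ^ (r - 1)`, where the field has `q ^ (r * k)` elements (`n = 7` when
`q = 2` and `r = 3`). If `w * u ^ (q ^ k + 1) * x ^ (q ^ (k + s) + q ^ s) + u * x ^ (q ^ s + 1) = 0`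
with `u` and `x` nonzero, then `w * u ^ (q ^ k) * x ^ (q ^ (k + s) - 1) = -1`. All factors other
than `u ^ (q ^ k)` are `n`-th powers, as is `-1` for odd `n`: `n` divides `q ^ (k + s) - 1` because
`r ∣ k + s`, and `w`, lying in the subfield of `q ^ k` elements, is an `n`-th power because `n`
divides `(q ^ (r * k) - 1) / (q ^ k - 1)` for `k` prime to `r`. Since `n` is prime to `q`, also `u`
is an `n`-th power, which a primitive element is not.
-/

open Finset

theorem coprime_geom_sum (q : ℕ) {r : ℕ} (hr : r ≠ 0) : q.Coprime (∑ i ∈ range r, q ^ i) := by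
  obtain ⟨r, rfl⟩ := Nat.exists_eq_succ_of_ne_zero hr
  simp [sum_range_succ', pow_succ, ← sum_mul]

theorem one_lt_geom_sum {q r : ℕ} (hq : 0 < q) (hr : 1 < r) : 1 < ∑ i ∈ range r, q ^ i :=
  calc 1 < ∑ i ∈ range 2, q ^ i := by simpa [sum_range_succ] using hq
    _ ≤ ∑ i ∈ range r, q ^ i := sum_le_sum_of_subset (range_mono hr)

theorem geom_sum_dvd_pow_sub_one {q r m : ℕ} (hq : 0 < q) (hrm : r ∣ m) :
    ∑ i ∈ range r, q ^ i ∣ q ^ m - 1 :=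
  (Dvd.intro _ (geom_sum_mul_of_one_le hq r)).trans (Nat.pow_sub_one_dvd_pow_sub_one q hrm)

theorem pow_sub_one_mul_geom_sum_dvd (q : ℕ) {r k : ℕ} (hkr : k.Coprime r) :
    (q ^ k - 1) * ∑ i ∈ range r, q ^ i ∣ q ^ (r * k) - 1 := by
  rcases le_or_gt q 1 with hq | hq
  · rw [Nat.sub_eq_zero_of_le (pow_le_one' hq (r * k))]
    exact dvd_zero _
  have hlcm : (q ^ k - 1).lcm (q ^ r - 1) = (q ^ k - 1) * ∑ i ∈ range r, q ^ i := by
    apply Nat.eq_of_mul_eq_mul_left (Nat.sub_pos_of_lt hq)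
    calc (q - 1) * (q ^ k - 1).lcm (q ^ r - 1)
        = (q ^ k - 1).gcd (q ^ r - 1) * (q ^ k - 1).lcm (q ^ r - 1) := by
          rw [Nat.pow_sub_one_gcd_pow_sub_one, hkr.gcd_eq_one, pow_one]
      _ = (q ^ k - 1) * (q ^ r - 1) := Nat.gcd_mul_lcm _ _
      _ = (q - 1) * ((q ^ k - 1) * ∑ i ∈ range r, q ^ i) := by
          rw [← geom_sum_mul_of_one_le hq.le r, mul_comm (∑ i ∈ range r, q ^ i), mul_left_comm]
  rw [← hlcm]
  exact Nat.lcm_dvd (Nat.pow_sub_one_dvd_pow_sub_one q (dvd_mul_left k r))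
    (Nat.pow_sub_one_dvd_pow_sub_one q (dvd_mul_right r k))

theorem mem_range_pow_of_pow_eq_one {G : Type*} [Group G] [Finite G] [IsCyclic G] {d n : ℕ}
    (hdn : d * n ∣ Nat.card G) {x : G} (hx : x ^ d = 1) : x ∈ Set.range (· ^ n : G → G) := by
  obtain ⟨g, hg⟩ := IsCyclic.exists_monoid_generator (α := G)
  obtain ⟨j, rfl⟩ := hg x
  have hcard : Nat.card G ∣ d * j := by
    rw [← orderOf_eq_card_of_forall_mem_powers hg, mul_comm]
    exact orderOf_dvd_of_pow_eq_one (by rwa [pow_mul])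
  have hd : 0 < d := Nat.pos_of_dvd_of_pos (dvd_of_mul_right_dvd hdn) Nat.card_pos
  obtain ⟨i, rfl⟩ := Nat.dvd_of_mul_dvd_mul_left hd (hdn.trans hcard)
  exact ⟨g ^ i, by simp only [← pow_mul, mul_comm]⟩

theorem pos_of_card_eq_pow {α : Type*} [Finite α] [Nontrivial α] {q m : ℕ}
    (h : Nat.card α = q ^ m) : 0 < q := by
  by_contra! hq
  exact Finite.one_lt_card.not_ge (h ▸ pow_le_one' (hq.trans zero_le_one) m)

section Field

variable {F : Type*} [Field F]

theorem mem_range_pow_of_pow_eq_self [Finite F] {m n : ℕ} (hm : 0 < m) (hn : n ≠ 0)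
    (hmn : (m - 1) * n ∣ Nat.card F - 1) {w : F} (hw : w ^ m = w) :
    w ∈ Set.range (· ^ n : F → F) := by
  rcases eq_or_ne w 0 with rfl | hw0
  · exact ⟨0, zero_pow hn⟩
  have hpow : w ^ (m - 1) = 1 := by
    rwa [← mul_left_eq_self₀.trans (or_iff_left hw0), pow_sub_one_mul hm.ne']
  rw [← Nat.card_units] at hmn
  obtain ⟨v, hv⟩ := mem_range_pow_of_pow_eq_one hmn (x := Units.mk0 w hw0) (Units.ext hpow)
  exact ⟨v, congrArg Units.val hv⟩

theorem notMem_range_pow_of_forall_exists_pow_eq [Finite F] {n : ℕ}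
    (hn : ¬(Nat.card F - 1).Coprime n) {u : F} (hu : ∀ x : F, x ≠ 0 → ∃ m : ℕ, x = u ^ m) :
    u ∉ Set.range (· ^ n : F → F) := by
  rintro ⟨a, rfl⟩
  have hsurj : Function.Surjective (powMonoidHom n : Fˣ →* Fˣ) := by
    intro x
    obtain ⟨m, hm⟩ := hu x x.ne_zero
    rw [pow_right_comm] at hm
    rcases eq_or_ne n 0 with rfl | hn0
    · exact ⟨1, Units.ext (by simpa using hm.symm)⟩
    · obtain ⟨y, hy⟩ := (isUnit_pow_iff hn0).mp (hm ▸ x.isUnit)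
      exact ⟨y, Units.ext (by simp [hy, hm])⟩
  apply hn
  rw [← Nat.card_units, Nat.Coprime, ← IsCyclic.index_powMonoidHom_range,
    MonoidHom.range_eq_top.mpr hsurj, Subgroup.index_top]

theorem notMem_range_pow_geom_sum_of_forall_exists_pow_eq [Finite F] {q r k : ℕ}
    (hF : Nat.card F = q ^ (r * k)) (hr : 1 < r) {u : F}
    (hu : ∀ x : F, x ≠ 0 → ∃ m : ℕ, x = u ^ m) :
    u ∉ Set.range (· ^ (∑ i ∈ range r, q ^ i) : F → F) := by
  have hq : 0 < q := pos_of_card_eq_pow hF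
  refine notMem_range_pow_of_forall_exists_pow_eq (fun hcop => ?_) hu
  refine (one_lt_geom_sum hq hr).ne' (hcop.symm.eq_one_of_dvd ?_)
  rw [hF]
  exact geom_sum_dvd_pow_sub_one hq (dvd_mul_right r k)

theorem mul_pow_add_mul_pow_ne_zero_s9 {n m : ℕ} (hn : Odd n) (hmn : m.Coprime n) {w u x : F}
    (hw : w ∈ Set.range (· ^ n : F → F)) (hu : u ∉ Set.range (· ^ n : F → F)) (hx : x ≠ 0)
    (t a : ℕ) : w * u ^ (m + 1) * x ^ (n * t + 1 + a) + u * x ^ (a + 1) ≠ 0 := by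
  obtain ⟨b, rfl⟩ := hw
  have hu0 : u ≠ 0 := by
    rintro rfl
    exact hu ⟨0, zero_pow hn.pos.ne'⟩
  intro hC
  have hprod : u ^ m * (b * x ^ t) ^ n = -1 := by
    apply mul_right_cancel₀ (mul_ne_zero hu0 (pow_ne_zero (a + 1) hx))
    linear_combination hC
  refine hu ((pow_mem_range_pow_of_coprime hmn u).mp ⟨-(b * x ^ t)⁻¹, ?_⟩)
  have hbx : (b * x ^ t) ^ n ≠ 0 := right_ne_zero_of_mul (hprod ▸ neg_ne_zero.mpr one_ne_zero)
  simp only [hn.neg_pow, inv_pow]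
  rw [eq_div_of_mul_eq hbx hprod, neg_div, one_div]

theorem coefficient_C_ne_zero_general [Finite F] {q r k s : ℕ} (hF : Nat.card F = q ^ (r * k))
    (hrks : r ∣ k + s) (hkr : k.Coprime r) (hn : Odd (∑ i ∈ range r, q ^ i)) {u w x : F}
    (hu : u ∉ Set.range (· ^ (∑ i ∈ range r, q ^ i) : F → F)) (hw : w ^ q ^ k = w) (hx : x ≠ 0) :
    w * u ^ (q ^ k + 1) * x ^ (q ^ (k + s) + q ^ s) + u * x ^ (q ^ s + 1) ≠ 0 := by
  have hr : r ≠ 0 := by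
    rintro rfl
    simp at hn
  have hq : 0 < q := pos_of_card_eq_pow hF
  obtain ⟨t, ht⟩ := geom_sum_dvd_pow_sub_one hq hrks
  rw [Nat.eq_add_of_sub_eq (Nat.one_le_pow _ _ hq) ht]
  refine mul_pow_add_mul_pow_ne_zero_s9 hn ((coprime_geom_sum q hr).pow_left k) ?_ hu hx t (q ^ s)
  exact mem_range_pow_of_pow_eq_self (pow_pos hq k) hn.pos.ne'
    (hF ▸ pow_sub_one_mul_geom_sum_dvd q hkr) hw

end Field

/-- The coefficient `C = w u^{2^k+1} q^{2^{k+s}+2^s} + u q^{2^s+1}` never vanishes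
for nonzero `q`. -/
theorem coefficient_C_ne_zero (s k : ℕ) (hs : 0 < s) (hk : 0 < k)
    (h3 : 3 ∣ (k + s)) (hsk : Nat.gcd s (3 * k) = 1) (hk3 : Nat.gcd k 3 = 1)
    (u w : GaloisField 2 (3 * k))
    (hu : ∀ x : GaloisField 2 (3 * k), x ≠ 0 → ∃ m : ℕ, x = u ^ m)
    (hw : w ^ (2 ^ k) = w) :
    ∀ q : GaloisField 2 (3 * k), q ≠ 0 →
      w * u ^ (2 ^ k + 1) * q ^ (2 ^ (k + s) + 2 ^ s) + u * q ^ (2 ^ s + 1) ≠ 0 := by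
  intro q hq
  have hcard : Nat.card (GaloisField 2 (3 * k)) = 2 ^ (3 * k) :=
    GaloisField.card 2 (3 * k) (by positivity)
  exact coefficient_C_ne_zero_general hcard h3 hk3 (by decide)
    (notMem_range_pow_geom_sum_of_forall_exists_pow_eq hcard (by norm_num) hu) hw hq
end

section
/- Let k be a positive integer and let θ be an element of GF(2^{3k}) that is a (2^k − 1)-th power of a nonzero element, i.e., θ = c^{2^k−1} for some nonzero c in GF(2^{3k}). Then for every x in GF(2^{3k}), setting T = θ·x + x^{2^{2k}}, one has T + θ·T^{2^k} + θ^{2^k+1}·T^{2^{2k}} = 0. -/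
/-!
Let `σ` be the `q`-power map, `q = 2 ^ k`. The relation `θ = c ^ (q - 1)` says `θ * c = σ c`, so
multiplying by `c` untwists `L_θ` into a trace: `c * L_θ(T) = ∑ i < 3, σ^[i] (c * T)`. For
`T = θ * x - σ^[2] x` one has `c * T = σ z - z` with `z = c * σ^[2] x`, because `σ^[3] x = x`. The
trace of `σ z - z` telescopes to `σ^[3] z - z = 0`, and `c` can be cancelled. In characteristic `2`
the sign in `T` disappears.
-/

open Finset

theorem prod_range_iterate_map_mul {M : Type*} [CommMonoid M] (σ : M →* M) {θ c : M}
    (h : θ * c = σ c) (n : ℕ) : (∏ i ∈ range n, σ^[i] θ) * c = σ^[n] c := by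
  induction n with
  | zero => simp
  | succ n ih =>
    calc (∏ i ∈ range (n + 1), σ^[i] θ) * c
        = σ^[n] θ * ((∏ i ∈ range n, σ^[i] θ) * c) := by
          rw [prod_range_succ, mul_comm (∏ i ∈ range n, _), mul_assoc]
      _ = σ^[n] (θ * c) := by rw [ih, iterate_map_mul]
      _ = σ^[n + 1] c := by rw [h, Function.iterate_succ_apply]

theorem sum_range_iterate_map_sub_self {A : Type*} [AddCommGroup A] (σ : A →+ A) (z : A) (n : ℕ) :
    ∑ i ∈ range n, σ^[i] (σ z - z) = σ^[n] z - z := by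
  simp only [iterate_map_sub, ← Function.iterate_succ_apply]
  exact sum_range_sub (fun i ↦ σ^[i] z) n

/-- The trace `∑ i < n, σ^[i] T` twisted by the partial norms `θ * σ θ * ⋯ * σ^[i - 1] θ`. For `σ`
the `2 ^ k`-power map and `n = 3` this is `L_θ(T)`. -/
def twistedTrace {R : Type*} [CommSemiring R] (σ : R →+* R) (n : ℕ) (θ T : R) : R :=
  ∑ i ∈ range n, (∏ j ∈ range i, σ^[j] θ) * σ^[i] T

theorem mul_twistedTrace {R : Type*} [CommSemiring R] (σ : R →+* R) {θ c : R}
    (h : θ * c = σ c) (n : ℕ) (T : R) :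
    c * twistedTrace σ n θ T = ∑ i ∈ range n, σ^[i] (c * T) := by
  rw [twistedTrace, mul_sum]
  refine sum_congr rfl fun i _ ↦ ?_
  have hprod : (∏ j ∈ range i, σ^[j] θ) * c = σ^[i] c :=
    prod_range_iterate_map_mul (σ : R →* R) h i
  rw [iterate_map_mul, ← hprod, mul_left_comm, mul_assoc]

theorem twistedTrace_mul_sub_iterate_eq_zero {R : Type*} [CommRing R] {σ : R →+* R} {n : ℕ}
    (hσ : σ^[n + 1] = id) {θ c : R} (hc : IsLeftRegular c) (h : θ * c = σ c) (x : R) :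
    twistedTrace σ (n + 1) θ (θ * x - σ^[n] x) = 0 := by
  set z := c * σ^[n] x with hz
  have hσz : σ z = c * (θ * x) := by
    rw [hz, map_mul, ← Function.iterate_succ_apply' σ, hσ, id, ← h, mul_comm θ, mul_assoc]
  refine hc.mul_left_eq_zero_iff.mp ?_
  calc c * twistedTrace σ (n + 1) θ (θ * x - σ^[n] x)
      = ∑ i ∈ range (n + 1), σ^[i] (σ z - z) := by rw [mul_twistedTrace σ h, mul_sub, hσz]
    _ = σ^[n + 1] z - z := sum_range_iterate_map_sub_self (σ : R →+ R) z (n + 1)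
    _ = 0 := by rw [hσ, id, sub_self]

theorem exists_ringHom_eq_pow_of_dvd_card {K : Type*} [Field K] [Finite K] {q : ℕ}
    (hq : q ∣ Nat.card K) : ∃ σ : K →+* K, ⇑σ = (· ^ q) := by
  have := Fintype.ofFinite K
  obtain ⟨p, _⟩ := CharP.exists K
  obtain ⟨N, hp, hcard⟩ := FiniteField.card K p
  rw [Nat.card_eq_fintype_card, hcard] at hq
  obtain ⟨m, -, rfl⟩ := (Nat.dvd_prime_pow hp).mp hq
  have := Fact.mk hp
  exact ⟨iterateFrobenius K p m, funext fun x ↦ iterateFrobenius_def p m x⟩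

theorem linearized_poly_vanishes_general {K : Type*} [Field K] [Finite K] {q n : ℕ}
    (hK : Nat.card K = q ^ (n + 1)) {θ c : K} (hc : c ≠ 0) (hθ : θ = c ^ (q - 1)) (x : K) :
    ∑ i ∈ range (n + 1), θ ^ (∑ j ∈ range i, q ^ j) * (θ * x - x ^ q ^ n) ^ q ^ i = 0 := by
  obtain ⟨σ, hσ⟩ := exists_ringHom_eq_pow_of_dvd_card (hK ▸ dvd_pow_self q n.succ_ne_zero)
  have hiter (i : ℕ) : σ^[i] = (· ^ q ^ i) := by rw [hσ, pow_iterate]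
  have hid : σ^[n + 1] = id := by
    have := Fintype.ofFinite K
    rw [hiter, ← hK, Nat.card_eq_fintype_card]
    exact funext FiniteField.pow_card
  have hq : q ≠ 0 := by
    rintro rfl
    simp [Nat.card_pos.ne'] at hK
  have hθc : θ * c = σ c := by rw [hθ, hσ, pow_sub_one_mul hq]
  simpa only [twistedTrace, hiter, prod_pow_eq_pow_sum] using
    twistedTrace_mul_sub_iterate_eq_zero hid (IsRegular.of_ne_zero hc).left hθc x

/-- If `θ` is a `(2^k − 1)`-th power of a nonzero element of `GF(2^{3k})`, then for
every `x`, putting `T = θ x + x^{2^{2k}}`, the linearized polynomial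
`L_θ(T) = T + θ T^{2^k} + θ^{2^k+1} T^{2^{2k}}` vanishes. -/
theorem linearized_poly_vanishes (k : ℕ) (hk : 0 < k)
    (θ c : GaloisField 2 (3 * k)) (hc : c ≠ 0) (hθ : θ = c ^ (2 ^ k - 1)) :
    ∀ x : GaloisField 2 (3 * k),
      (θ * x + x ^ (2 ^ (2 * k)))
        + θ * (θ * x + x ^ (2 ^ (2 * k))) ^ (2 ^ k)
        + θ ^ (2 ^ k + 1) * (θ * x + x ^ (2 ^ (2 * k))) ^ (2 ^ (2 * k)) = 0 := by
  intro x
  have hcard : Nat.card (GaloisField 2 (3 * k)) = (2 ^ k) ^ (2 + 1) := by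
    rw [GaloisField.card 2 _ (by lia), mul_comm, pow_mul]
  simpa [sum_range_succ, CharTwo.sub_eq_add, ← pow_mul, mul_comm k, add_comm 1] using
    linearized_poly_vanishes_general hcard hc hθ x
end

section
/- Let s and k be positive integers with k+s divisible by 3, gcd(s,3k)=1 and gcd(k,3)=1, let u be a primitive element of GF(2^{3k}), and let v be an element of the subfield GF(2^k). For a nonzero q in GF(2^{3k}), set A = v·q^{2^{2k}+1} + u·q^{2^s+1} and B = v·q^{2^{2k}+1} + u^{2^k}·q^{2^{2k}+2^{k+s}}. Then A/B is a (2^k − 1)-th power in GF(2^{3k}): there exists a nonzero c in GF(2^{3k}) with A = c^{2^k−1}·B. -/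
/-!
Write `r = q ^ p ^ l` and `x = v * q ^ p ^ l + u * q ^ p ^ s`, so that `A = q * x`. Since
`r ^ p ^ k = q` and `v` is fixed by the additive map `y ↦ y ^ p ^ k`, also `B = r * x ^ p ^ k`.
Hence `A / B = r ^ p ^ k * x / (r * x ^ p ^ k) = (r / x) ^ (p ^ k - 1)` when `A` and `B` are
nonzero; otherwise both vanish, and `c = 1` works. For `GF(2 ^ (3 * k))` one takes `l = 2 * k`.
-/

theorem exists_pow_mul_eq_pow_sub_one_mul {G₀ : Type*} [CommGroupWithZero G₀] {n : ℕ}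
    (hn : n ≠ 0) (r x : G₀) : ∃ c : G₀, c ≠ 0 ∧ r ^ n * x = c ^ (n - 1) * (r * x ^ n) := by
  rcases eq_or_ne r 0 with rfl | hr
  · exact ⟨1, one_ne_zero, by simp [hn]⟩
  rcases eq_or_ne x 0 with rfl | hx
  · exact ⟨1, one_ne_zero, by simp [hn]⟩
  refine ⟨r / x, div_ne_zero hr hx, ?_⟩
  calc
    r ^ n * x = (r / x * x) ^ (n - 1) * (r * x) := by
      rw [div_mul_cancel₀ r hx, ← mul_assoc, pow_sub_one_mul hn]
    _ = (r / x) ^ (n - 1) * (r * x ^ n) := by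
      rw [mul_pow, mul_assoc, mul_left_comm (x ^ (n - 1)), pow_sub_one_mul hn]

theorem galoisField_pow_card {p n : ℕ} [Fact p.Prime] (hn : n ≠ 0) (x : GaloisField p n) :
    x ^ p ^ n = x := by
  cases nonempty_fintype (GaloisField p n)
  rw [← GaloisField.card p n hn, Nat.card_eq_fintype_card, FiniteField.pow_card]

theorem A_div_B_is_power_general {F : Type*} [Field F] (p : ℕ) [ExpChar F p] (k l s : ℕ)
    (u : F) {v q : F} (hv : v ^ p ^ k = v) (hq : q ^ p ^ (l + k) = q) :
    ∃ c : F, c ≠ 0 ∧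
      v * q ^ (p ^ l + 1) + u * q ^ (p ^ s + 1)
        = c ^ (p ^ k - 1)
          * (v * q ^ (p ^ l + 1) + u ^ p ^ k * q ^ (p ^ l + p ^ (k + s))) := by
  have hr : (q ^ p ^ l) ^ p ^ k = q := by
    rw [← pow_mul, ← pow_add, hq]
  have hx : (v * q ^ p ^ l + u * q ^ p ^ s) ^ p ^ k = v * q + u ^ p ^ k * q ^ p ^ (k + s) := by
    rw [add_pow_expChar_pow, mul_pow, mul_pow, hv, hr, ← pow_mul, ← pow_add, add_comm s k]
  obtain ⟨c, hc, h⟩ := exists_pow_mul_eq_pow_sub_one_mul (expChar_pow_pos F p k).ne'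
    (q ^ p ^ l) (v * q ^ p ^ l + u * q ^ p ^ s)
  rw [hr, hx] at h
  exact ⟨c, hc, by linear_combination h⟩

/-- The ratio `A/B` of the coefficients `A = v q^{2^{2k}+1} + u q^{2^s+1}` and
`B = v q^{2^{2k}+1} + u^{2^k} q^{2^{2k}+2^{k+s}}` is a `(2^k − 1)`-th power. -/
theorem A_div_B_is_power (s k : ℕ) (hs : 0 < s) (hk : 0 < k)
    (h3 : 3 ∣ (k + s)) (hsk : Nat.gcd s (3 * k) = 1) (hk3 : Nat.gcd k 3 = 1)
    (u v : GaloisField 2 (3 * k))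
    (hu : ∀ x : GaloisField 2 (3 * k), x ≠ 0 → ∃ m : ℕ, x = u ^ m)
    (hv : v ^ (2 ^ k) = v)
    (q : GaloisField 2 (3 * k)) (hq : q ≠ 0) :
    ∃ c : GaloisField 2 (3 * k), c ≠ 0 ∧
      v * q ^ (2 ^ (2 * k) + 1) + u * q ^ (2 ^ s + 1)
        = c ^ (2 ^ k - 1)
          * (v * q ^ (2 ^ (2 * k) + 1) + u ^ (2 ^ k) * q ^ (2 ^ (2 * k) + 2 ^ (k + s))) :=
  A_div_B_is_power_general 2 k (2 * k) s u hv <| by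
    rw [← Nat.succ_mul, galoisField_pow_card (by lia)]
end

section
/- Let s and k be positive integers with k+s divisible by 3, gcd(s,3k)=1 and gcd(k,3)=1, and let u be a primitive element of GF(2^{3k}). Then for every nonzero q in GF(2^{3k}), the element a in GF(2^{3k}) determined by a·q^{2^s+1} = u^{2^k−1}·q^{2^{2k}+2^{k+s}} is not a seventh power in GF(2^{3k}); that is, there is no c in GF(2^{3k}) with c^7 = a. -/
/-!
Since `k + s ≡ 0 [MOD 3]`, also `2 * k ≡ s [MOD 3]`, so the exponents `2 ^ (2 * k) + 2 ^ (k + s)`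
and `2 ^ s + 1` of `q` agree modulo `7 = 2 ^ 3 - 1`. Hence `a` differs from `u ^ (2 ^ k - 1)` by a
seventh power. As `7` divides the order of the generator `u`, this power of `u` is a seventh power
if and only if `7 ∣ 2 ^ k - 1`, i.e. if and only if `3 ∣ k`. The same argument works with any
`b > 1` in place of `2`, any `r` in place of `3` and `b ^ r - 1` in place of `7`.
-/

theorem pow_sub_one_dvd_pow_sub_one_iff {b r k : ℕ} (hb : 1 < b) :
    b ^ r - 1 ∣ b ^ k - 1 ↔ r ∣ k := by
  rw [Nat.dvd_iff_mod_eq_zero, Nat.pow_sub_one_mod_pow_sub_one, Nat.sub_eq_zero_iff_le,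
    ← pow_zero b, Nat.pow_le_pow_iff_right hb, Nat.le_zero, Nat.dvd_iff_mod_eq_zero]

theorem pow_modEq_pow_of_modEq {b r m n : ℕ} (hb : 0 < b) (h : m ≡ n [MOD r]) :
    b ^ m ≡ b ^ n [MOD b ^ r - 1] := by
  have pow_modEq_pow_mod (i : ℕ) : b ^ i ≡ b ^ (i % r) [MOD b ^ r - 1] := by
    have hone : b ^ r ≡ 1 [MOD b ^ r - 1] := Nat.modEq_sub (Nat.pow_pos hb)
    calc b ^ i = (b ^ r) ^ (i / r) * b ^ (i % r) := by rw [← pow_mul, ← pow_add, Nat.div_add_mod]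
      _ ≡ 1 ^ (i / r) * b ^ (i % r) [MOD b ^ r - 1] := (hone.pow _).mul_right _
      _ = b ^ (i % r) := by rw [one_pow, one_mul]
  calc b ^ m ≡ b ^ (m % r) [MOD b ^ r - 1] := pow_modEq_pow_mod m
    _ = b ^ (n % r) := by rw [h]
    _ ≡ b ^ n [MOD b ^ r - 1] := (pow_modEq_pow_mod n).symm

theorem exists_pow_eq_pow_iff_dvd {G : Type*} [Group G] {u : G}
    (hu : ∀ x, x ∈ Subgroup.zpowers u) {d : ℕ} (hd : d ∣ Nat.card G) (j : ℕ) :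
    (∃ c, c ^ d = u ^ j) ↔ d ∣ j := by
  constructor
  · rintro ⟨c, hc⟩
    obtain ⟨i, rfl⟩ := hu c
    have hpow : u ^ (i * d) = u ^ (j : ℤ) := by simpa [zpow_mul] using hc
    have hmod : i * d ≡ j [ZMOD d] :=
      (zpow_eq_zpow_iff_modEq.1 hpow).of_dvd
        (Int.natCast_dvd_natCast.2 (orderOf_eq_card_of_forall_mem_zpowers hu ▸ hd))
    exact Int.natCast_dvd_natCast.1 (hmod.dvd_iff.1 (dvd_mul_left _ _))
  · rintro ⟨t, rfl⟩
    exact ⟨u ^ t, by rw [← pow_mul, mul_comm]⟩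

theorem exists_pow_eq_iff_of_mul_pow_eq {G : Type*} [CommGroup G] {d e e' : ℕ}
    (he : e ≡ e' [MOD d]) {a q x : G} (h : a * q ^ e = x * q ^ e') :
    (∃ c, c ^ d = a) ↔ ∃ c, c ^ d = x := by
  obtain ⟨t, ht⟩ := he.dvd
  have ha : a = x * (q ^ t) ^ d := by
    rw [← zpow_natCast (q ^ t), ← zpow_mul, mul_comm t, ← ht, zpow_sub, ← mul_assoc,
      eq_mul_inv_iff_mul_eq]
    exact_mod_cast h
  exact ha ▸ (powMonoidHom d).range.mul_mem_cancel_right ⟨q ^ t, rfl⟩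

theorem exists_pow_sub_one_eq_iff_dvd {G : Type*} [CommGroup G] {b r s k e : ℕ} (hb : 1 < b)
    (hcard : b ^ r - 1 ∣ Nat.card G) (hks : r ∣ k + s) (he : e ≡ s [MOD r]) {u : G}
    (hu : ∀ x, x ∈ Subgroup.zpowers u) {q a : G}
    (h : a * q ^ (b ^ s + 1) = u ^ (b ^ k - 1) * q ^ (b ^ e + b ^ (k + s))) :
    (∃ c, c ^ (b ^ r - 1) = a) ↔ r ∣ k := by
  have hb0 : 0 < b := Nat.zero_lt_of_lt hb
  have hexp : b ^ e + b ^ (k + s) ≡ b ^ s + 1 [MOD b ^ r - 1] :=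
    (pow_modEq_pow_of_modEq hb0 he).add
      (pow_modEq_pow_of_modEq hb0 (Nat.modEq_zero_iff_dvd.2 hks))
  calc (∃ c, c ^ (b ^ r - 1) = a)
    _ ↔ ∃ c, c ^ (b ^ r - 1) = u ^ (b ^ k - 1) := exists_pow_eq_iff_of_mul_pow_eq hexp.symm h
    _ ↔ b ^ r - 1 ∣ b ^ k - 1 := exists_pow_eq_pow_iff_dvd hu hcard _
    _ ↔ r ∣ k := pow_sub_one_dvd_pow_sub_one_iff hb

theorem ne_zero_of_forall_exists_eq_pow {M₀ : Type*} [MonoidWithZero M₀] [Nontrivial M₀ˣ] {u : M₀}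
    (hu : ∀ x : M₀, x ≠ 0 → ∃ m : ℕ, x = u ^ m) : u ≠ 0 := by
  rintro rfl
  obtain ⟨x, hx⟩ := exists_ne (1 : M₀ˣ)
  have : Nontrivial M₀ := ⟨x, 1, by simpa using hx⟩
  obtain ⟨m, hm⟩ := hu x x.ne_zero
  rcases eq_or_ne m 0 with rfl | hm0
  · exact hx (Units.ext (by simpa using hm))
  · exact x.ne_zero (hm.trans (zero_pow hm0))

theorem a_not_seventh_power_general {G₀ : Type*} [CommGroupWithZero G₀] {b r s k e : ℕ}
    (hb : 1 < b) (hcard : b ^ r - 1 ∣ Nat.card G₀ˣ) (hks : r ∣ k + s) (he : e ≡ s [MOD r])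
    (hk : ¬ r ∣ k) {u : G₀} (hu : ∀ x : G₀, x ≠ 0 → ∃ m : ℕ, x = u ^ m) {q : G₀} (hq : q ≠ 0)
    {a : G₀} (h : a * q ^ (b ^ s + 1) = u ^ (b ^ k - 1) * q ^ (b ^ e + b ^ (k + s))) :
    ¬ ∃ c : G₀, c ^ (b ^ r - 1) = a := by
  rintro ⟨c, hc⟩
  have hr : r ≠ 0 := by
    rintro rfl
    exact hk (zero_dvd_iff.2 (Nat.add_eq_zero_iff.1 (zero_dvd_iff.1 hks)).1)
  have hbr : 1 < b ^ r := Nat.one_lt_pow hr hb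
  have hnontrivial : Nontrivial G₀ˣ := by
    refine not_subsingleton_iff_nontrivial.1 fun _ => hk ?_
    rw [← pow_sub_one_dvd_pow_sub_one_iff hb]
    exact (Nat.card_unique (α := G₀ˣ) ▸ hcard).trans (one_dvd _)
  have hu0 : u ≠ 0 := ne_zero_of_forall_exists_eq_pow hu
  have ha : a ≠ 0 := left_ne_zero_of_mul
    (h ▸ mul_ne_zero (pow_ne_zero _ hu0) (pow_ne_zero _ hq))
  have hc0 : c ≠ 0 := ne_zero_pow (Nat.sub_ne_zero_of_lt hbr) (hc ▸ ha)
  lift u to G₀ˣ using hu0.isUnit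
  lift q to G₀ˣ using hq.isUnit
  lift a to G₀ˣ using ha.isUnit
  lift c to G₀ˣ using hc0.isUnit
  have hgen (x : G₀ˣ) : x ∈ Subgroup.zpowers u := by
    obtain ⟨m, hm⟩ := hu x x.ne_zero
    exact ⟨m, by exact_mod_cast hm.symm⟩
  exact hk ((exists_pow_sub_one_eq_iff_dvd hb hcard hks he hgen (by exact_mod_cast h)).1
    ⟨c, by exact_mod_cast hc⟩)

/-- For nonzero `q`, the element `a` with `a q^{2^s+1} = u^{2^k−1} q^{2^{2k}+2^{k+s}}`
(i.e. `a = u^{2^k−1} q^{2^{2k}+2^{k+s}−2^s−1}`) is not a seventh power in `GF(2^{3k})`. -/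
theorem a_not_seventh_power (s k : ℕ) (hs : 0 < s) (hk : 0 < k)
    (h3 : 3 ∣ (k + s)) (hsk : Nat.gcd s (3 * k) = 1) (hk3 : Nat.gcd k 3 = 1)
    (u : GaloisField 2 (3 * k))
    (hu : ∀ x : GaloisField 2 (3 * k), x ≠ 0 → ∃ m : ℕ, x = u ^ m) :
    ∀ q : GaloisField 2 (3 * k), q ≠ 0 →
      ∀ a : GaloisField 2 (3 * k),
        a * q ^ (2 ^ s + 1) = u ^ (2 ^ k - 1) * q ^ (2 ^ (2 * k) + 2 ^ (k + s)) →
        ¬ ∃ c : GaloisField 2 (3 * k), c ^ 7 = a := by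
  intro q hq a h
  have hk_ndvd : ¬ 3 ∣ k := by
    rwa [← Nat.Prime.coprime_iff_not_dvd Nat.prime_three, Nat.coprime_comm]
  have hexp : 2 * k ≡ s [MOD 3] := by
    unfold Nat.ModEq
    omega
  have hcard : 2 ^ 3 - 1 ∣ Nat.card (GaloisField 2 (3 * k))ˣ := by
    rw [Nat.card_units, GaloisField.card 2 (3 * k) (by positivity)]
    exact (pow_sub_one_dvd_pow_sub_one_iff one_lt_two).2 (dvd_mul_right 3 k)
  exact a_not_seventh_power_general one_lt_two hcard h3 hexp hk_ndvd hu hq h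
end

section
/- Let s and k be positive integers with k+s divisible by 3, gcd(s,3k)=1 and gcd(k,3)=1, and let u be a primitive element of GF(2^{3k}). Then for every nonzero q in GF(2^{3k}), u·q^{2^s+1} + u^{2^k}·q^{2^{2k}+2^{k+s}} ≠ 0. -/
/-!
Modulo `7` a power of `2` depends only on its exponent modulo `3`, so `3 ∣ k + s` makes the two
exponents of `q` congruent modulo `7`. If the sum vanished, `u ^ (2 ^ k - 1)` would therefore be a
seventh power, up to the sign `-1 = (-1) ^ 7`. As `2 ^ k - 1` is coprime to `7 = 2 ^ 3 - 1`, `u`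
itself would be a seventh power. A primitive element is not, because `7` divides `2 ^ (3 * k) - 1`.
-/

theorem pow_modEq_pow_of_modEq_s15 {x a b n : ℕ} (hx : 0 < x) (hab : a ≡ b [MOD n]) :
    x ^ a ≡ x ^ b [MOD x ^ n - 1] := by
  have hn : x ^ n ≡ 1 [MOD x ^ n - 1] :=
    ((Nat.modEq_iff_dvd' (Nat.one_le_pow n x hx)).mpr dvd_rfl).symm
  rw [← ZMod.natCast_eq_natCast_iff] at hn ⊢
  push_cast at hn ⊢
  exact pow_eq_pow_of_modEq hab hn

theorem two_pow_add_one_modEq_seven {s k : ℕ} (h : 3 ∣ k + s) :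
    2 ^ s + 1 ≡ 2 ^ (2 * k) + 2 ^ (k + s) [MOD 7] := by
  have hs : s ≡ 2 * k [MOD 3] := by unfold Nat.ModEq; omega
  have h0 : 0 ≡ k + s [MOD 3] := (Nat.modEq_zero_iff_dvd.mpr h).symm
  exact (pow_modEq_pow_of_modEq_s15 two_pos hs).add (pow_modEq_pow_of_modEq_s15 two_pos h0)

theorem coprime_two_pow_sub_one_s15 {a b : ℕ} (h : a.Coprime b) :
    (2 ^ a - 1).Coprime (2 ^ b - 1) := by
  rw [Nat.Coprime, Nat.pow_sub_one_gcd_pow_sub_one, h.gcd_eq_one, pow_one]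

theorem pow_div_pow_mem_range_pow {G : Type*} [CommGroupWithZero G] {q : G} (hq : q ≠ 0)
    {a b n : ℕ} (hab : a ≡ b [MOD n]) : q ^ a / q ^ b ∈ Set.range (· ^ n : G → G) := by
  obtain ⟨c, hc⟩ := hab.symm.dvd
  refine ⟨q ^ c, ?_⟩
  change (q ^ c) ^ n = q ^ a / q ^ b
  rw [← zpow_natCast, ← zpow_mul, mul_comm, ← hc, zpow_sub₀ hq, zpow_natCast, zpow_natCast]

theorem mem_range_pow_of_mul_pow_add_pow_mul_pow_eq_zero {F : Type*} [Field F] {n d a b : ℕ}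
    (hn : Odd n) (hd : d.Coprime n) (hab : a ≡ b [MOD n]) {u q : F} (hq : q ≠ 0)
    (h : u * q ^ a + u ^ (d + 1) * q ^ b = 0) : u ∈ Set.range (· ^ n : F → F) := by
  obtain rfl | hu := eq_or_ne u 0
  · exact ⟨0, zero_pow hn.pos.ne'⟩
  obtain ⟨w, hw : w ^ n = q ^ a / q ^ b⟩ := pow_div_pow_mem_range_pow hq hab
  have hud : u ^ d = (-w) ^ n := by
    have hfactor : u * (q ^ a + u ^ d * q ^ b) = 0 := by linear_combination h
    have hsum := (mul_eq_zero.mp hfactor).resolve_left hu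
    rw [hn.neg_pow, hw]
    field_simp
    linear_combination hsum
  exact (pow_mem_range_pow_of_coprime hd u).mp ⟨-w, hud.symm⟩

theorem notMem_range_pow_of_forall_eq_pow_s15 {F : Type*} [Field F] [Finite F] {n : ℕ} (hn : n ≠ 1)
    (hdvd : n ∣ Nat.card F - 1) {u : F} (hu : ∀ x : F, x ≠ 0 → ∃ m : ℕ, x = u ^ m) :
    u ∉ Set.range (· ^ n : F → F) := by
  rintro ⟨v, rfl⟩
  have hcard : n ∣ Nat.card Fˣ := by rwa [Nat.card_units]
  have hn0 : n ≠ 0 := ne_zero_of_dvd_ne_zero Nat.card_pos.ne' hcard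
  have hsurj : Function.Surjective (powMonoidHom n : Fˣ →* Fˣ) := fun x => by
    obtain ⟨m, hm⟩ := hu x x.ne_zero
    have hx : (v ^ m) ^ n = x := by rw [hm, pow_right_comm]
    have hv : v ^ m ≠ 0 := (pow_ne_zero_iff hn0).mp (hx ▸ x.ne_zero)
    exact ⟨Units.mk0 (v ^ m) hv, Units.ext hx⟩
  have hindex := IsCyclic.index_powMonoidHom_range (G := Fˣ) n
  rw [MonoidHom.range_eq_top.mpr hsurj, Subgroup.index_top, Nat.gcd_eq_right hcard] at hindex
  exact hn hindex.symm

theorem pow_sub_one_dvd_card_galoisField_sub_one (p : ℕ) [Fact p.Prime] {m n : ℕ} (hn : n ≠ 0)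
    (hmn : m ∣ n) : p ^ m - 1 ∣ Nat.card (GaloisField p n) - 1 := by
  rw [GaloisField.card p n hn]
  exact Nat.pow_sub_one_dvd_pow_sub_one p hmn

theorem sum_ne_zero_general {F : Type*} [Field F] {s k : ℕ} (h3 : 3 ∣ k + s) (hk3 : k.Coprime 3)
    {u : F} (hu : u ∉ Set.range (· ^ 7 : F → F)) {q : F} (hq : q ≠ 0) :
    u * q ^ (2 ^ s + 1) + u ^ (2 ^ k) * q ^ (2 ^ (2 * k) + 2 ^ (k + s)) ≠ 0 := by
  intro hsum
  rw [← Nat.sub_add_cancel (Nat.one_le_two_pow (n := k))] at hsum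
  exact hu (mem_range_pow_of_mul_pow_add_pow_mul_pow_eq_zero (by decide)
    (coprime_two_pow_sub_one_s15 hk3) (two_pow_add_one_modEq_seven h3) hq hsum)

/-- For every nonzero `q`, `u q^{2^s+1} + u^{2^k} q^{2^{2k}+2^{k+s}} ≠ 0`. -/
theorem sum_ne_zero (s k : ℕ) (hs : 0 < s) (hk : 0 < k)
    (h3 : 3 ∣ (k + s)) (hsk : Nat.gcd s (3 * k) = 1) (hk3 : Nat.gcd k 3 = 1)
    (u : GaloisField 2 (3 * k))
    (hu : ∀ x : GaloisField 2 (3 * k), x ≠ 0 → ∃ m : ℕ, x = u ^ m) :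
    ∀ q : GaloisField 2 (3 * k), q ≠ 0 →
      u * q ^ (2 ^ s + 1) + u ^ (2 ^ k) * q ^ (2 ^ (2 * k) + 2 ^ (k + s)) ≠ 0 :=
  have h7 : 7 ∣ Nat.card (GaloisField 2 (3 * k)) - 1 :=
    pow_sub_one_dvd_card_galoisField_sub_one 2 (by omega) (dvd_mul_right 3 k)
  fun _ => sum_ne_zero_general h3 hk3 (notMem_range_pow_of_forall_eq_pow_s15 (by decide) h7 hu)
end
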